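/- The unit element υ = Σ_F (−1)^{rk(F)} H_F of the Tits algebra ℝΣ[𝒜] (sum over essentially bounded faces F) is characteristic of parameter 1; that is, for every flat X of 𝒜, Σ (−1)^{rk(F)} = 1, where the sum is over all essentially bounded faces F with supp(F) ⊆ X. -/

import Mathlib

open Finset MeasureTheory

noncomputable section

namespace CharElts

/-- Ambient Euclidean space `ℝ^n`. -/
abbrev V (n : ℕ) := EuclideanSpace ℝ (Fin n)

/-- An affine functional on `ℝ^n`; a hyperplane is its zero set. -/
abbrev AffForm (n : ℕ) := V n →ᵃ[ℝ] ℝ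

/-- The hyperplane determined by an affine functional. -/
def hypSet {n : ℕ} (ℓ : AffForm n) : Set (V n) := {x | ℓ x = 0}

variable {n : ℕ} (𝒜 : Finset (AffForm n))

/-- Index type for the hyperplanes of the arrangement. -/
abbrev Idx := {ℓ : AffForm n // ℓ ∈ 𝒜}

/-- The (possibly empty) set cut out by a sign vector `σ`. -/
def faceSet (σ : Idx 𝒜 → SignType) : Set (V n) :=
  {x | ∀ ℓ : Idx 𝒜, SignType.sign (ℓ.1 x) = σ ℓ}

/-- A face of the arrangement: a sign vector whose face set is nonempty. -/
@[ext] structure Face where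
  sgn : Idx 𝒜 → SignType
  nonempty : (faceSet 𝒜 sgn).Nonempty

open Classical in
instance : Fintype (Face 𝒜) :=
  Fintype.ofInjective Face.sgn (fun F G h => by cases F; cases G; simpa using h)

/-- The underlying point set of a face. -/
def Face.carrier (F : Face 𝒜) : Set (V n) := faceSet 𝒜 F.sgn

/-- A flat: a nonempty intersection of some subcollection of the hyperplanes
(the empty intersection gives all of `ℝ^n`). -/
def IsFlat (X : Set (V n)) : Prop :=
  X.Nonempty ∧ ∃ P : Idx 𝒜 → Prop, X = ⋂ ℓ ∈ {ℓ : Idx 𝒜 | P ℓ}, hypSet ℓ.1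

/-- The poset of flats, ordered by inclusion. -/
def Flat := {X : Set (V n) // IsFlat 𝒜 X}

instance : PartialOrder (Flat 𝒜) :=
  inferInstanceAs (PartialOrder {X : Set (V n) // IsFlat 𝒜 X})

lemma flat_eq_inter (X : Flat 𝒜) :
    X.1 = ⋂ ℓ ∈ {ℓ : Idx 𝒜 | X.1 ⊆ hypSet ℓ.1}, hypSet ℓ.1 := by
  obtain ⟨Z, hne, P, rfl⟩ := X
  apply subset_antisymm
  · intro x hx
    simp only [Set.mem_iInter, Set.mem_setOf_eq]
    intro ℓ hℓ
    exact hℓ hx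
  · intro x hx
    simp only [Set.mem_iInter, Set.mem_setOf_eq] at hx ⊢
    intro ℓ hℓ
    refine hx ℓ ?_
    intro y hy
    simp only [Set.mem_iInter, Set.mem_setOf_eq] at hy
    exact hy ℓ hℓ

open Classical in
instance : Fintype (Flat 𝒜) :=
  Fintype.ofInjective (fun X : Flat 𝒜 => {ℓ : Idx 𝒜 | X.1 ⊆ hypSet ℓ.1}) <| by
    intro X Y h
    dsimp only at h
    apply Subtype.ext
    rw [flat_eq_inter 𝒜 X, flat_eq_inter 𝒜 Y, h]

/-- The top flat: the whole ambient space. -/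
def topFlat : Flat 𝒜 :=
  ⟨Set.univ, ⟨⟨0, trivial⟩, fun _ => False, by simp⟩⟩

/-- The support of a face: the intersection of the hyperplanes on which it lies. -/
def supp (F : Face 𝒜) : Flat 𝒜 :=
  ⟨⋂ ℓ ∈ {ℓ : Idx 𝒜 | F.sgn ℓ = 0}, hypSet ℓ.1, by
    constructor
    · obtain ⟨x, hx⟩ := F.nonempty
      refine ⟨x, ?_⟩
      simp only [Set.mem_iInter, Set.mem_setOf_eq]
      intro ℓ hℓ
      have h0 := hx ℓ
      rw [hℓ] at h0
      simpa [hypSet, sign_eq_zero_iff] using h0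
    · exact ⟨fun ℓ => F.sgn ℓ = 0, rfl⟩⟩

/-- The dimension of (the affine hull of) a subset of `ℝ^n`. -/
def dimS (X : Set (V n)) : ℕ := Module.finrank ℝ (vectorSpan ℝ X)

open Classical in
/-- An element `w = Σ_F w^F H_F` of the Tits algebra (recorded by its coefficient
vector) is *characteristic of parameter `t`* if for every flat `X`, the sum of the
coefficients of the faces with support contained in `X` equals `t ^ rk X`,
where `rk X = dim X - d` and `d` is the common dimension of the minimal flats. -/
def IsCharacteristic (d : ℕ) (w : Face 𝒜 → ℝ) (t : ℝ) : Prop :=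
  ∀ X : Flat 𝒜,
    (∑ F : Face 𝒜, if (supp 𝒜 F).1 ⊆ X.1 then w F else 0) = t ^ (dimS X.1 - d)

/-- The sign vector of the Tits product `FG` of two faces. -/
def combineSgn {I : Type*} (σ τ : I → SignType) : I → SignType :=
  fun ℓ => if σ ℓ = 0 then τ ℓ else σ ℓ

open Classical in
/-- The product of the Tits algebra, on coefficient vectors:
`(u·v)^C = Σ_{F,G : FG = C} u^F v^G`, extending `H_F · H_G = H_{FG}` bilinearly. -/
def mulT (u v : Face 𝒜 → ℝ) : Face 𝒜 → ℝ :=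
  fun C => ∑ F : Face 𝒜, ∑ G : Face 𝒜,
    if combineSgn F.sgn G.sgn = C.sgn then u F * v G else 0

open Classical in
/-- The basis element `H_F` of the Tits algebra, as a coefficient vector. -/
def unitV (F : Face 𝒜) : Face 𝒜 → ℝ := fun G => if G = F then 1 else 0

/-- A chamber: a face whose sign vector is nowhere zero. -/
def IsChamber (F : Face 𝒜) : Prop := ∀ ℓ : Idx 𝒜, F.sgn ℓ ≠ 0

open Classical in
/-- `IsMoebius 𝒜 μ` states that `μ` is the Möbius function of the poset of
flats of `𝒜` (these conditions determine `μ` uniquely). -/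
def IsMoebius (μ : Flat 𝒜 → Flat 𝒜 → ℝ) : Prop :=
  (∀ X, μ X X = 1) ∧
  (∀ X Y : Flat 𝒜, X < Y →
    (∑ Z : Flat 𝒜, if X ≤ Z ∧ Z ≤ Y then μ X Z else 0) = 0) ∧
  (∀ X Y : Flat 𝒜, ¬ X ≤ Y → μ X Y = 0)

open Classical in
/-- `χ(𝒜^X, t) = Σ_{Y ≤ X} μ(Y, X) t^{rk Y}`: the characteristic polynomial of the
arrangement under the flat `X`.  Taking `X = ⊤` gives the characteristic
polynomial of `𝒜` itself. -/
def charPolyUnder (μ : Flat 𝒜 → Flat 𝒜 → ℝ) (d : ℕ) (X : Flat 𝒜) (t : ℝ) : ℝ :=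
  ∑ Y : Flat 𝒜, if Y ≤ X then μ Y X * t ^ (dimS Y.1 - d) else 0

/-- The space of directions `L = ⋂_{H ∈ 𝒜} dir(H)`: the intersection of the kernels of
the linear parts of the defining functionals. -/
def dirL : Submodule ℝ (V n) := ⨅ ℓ : Idx 𝒜, LinearMap.ker ℓ.1.linear

/-- A face is essentially bounded if its image in `ℝ^n / L` is bounded. -/
def EssBounded (F : Face 𝒜) : Prop :=
  Bornology.IsBounded ((dirL 𝒜).mkQ '' F.carrier)

/-- A hyperplane (zero set of a nonconstant affine functional) is nonempty. -/
lemma hyp_nonempty (ℓ : AffForm n) (h : ℓ.linear ≠ 0) : (hypSet ℓ).Nonempty := by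
  obtain ⟨v, hv⟩ : ∃ v, ℓ.linear v ≠ 0 := by
    by_contra hc
    push_neg at hc
    exact h (LinearMap.ext fun v => hc v)
  refine ⟨((-ℓ 0) / (ℓ.linear v)) • v, ?_⟩
  have hdecomp : ℓ (((-ℓ 0) / (ℓ.linear v)) • v)
      = ℓ.linear (((-ℓ 0) / (ℓ.linear v)) • v) + ℓ 0 := by
    conv_lhs => rw [show ((-ℓ 0) / (ℓ.linear v)) • v = ((-ℓ 0) / (ℓ.linear v)) • v +ᵥ (0 : V n)
      from (add_zero _).symm]
    rw [AffineMap.map_vadd]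
    rfl
  show ℓ _ = 0
  rw [hdecomp, LinearMap.map_smul, smul_eq_mul, div_mul_cancel₀ _ hv, neg_add_cancel]

section Helpers

lemma aff_add_smul (ℓ : AffForm n) (x v : V n) (t : ℝ) :
    ℓ (x + t • v) = ℓ x + t * ℓ.linear v := by
  have h : ℓ (t • v +ᵥ x) = ℓ.linear (t • v) +ᵥ ℓ x := ℓ.map_vadd x (t • v)
  simp only [vadd_eq_add, map_smul, smul_eq_mul] at h
  rw [add_comm x, h, add_comm]

lemma aff_sub (ℓ : AffForm n) (x y : V n) : ℓ.linear (x - y) = ℓ x - ℓ y := by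
  have h := aff_add_smul ℓ y (x - y) 1
  simp only [one_smul, one_mul, add_sub_cancel] at h
  linarith

lemma aff_eq (ℓ : AffForm n) (x : V n) : ℓ x = ℓ.linear x + ℓ 0 := by
  have := aff_sub ℓ x 0
  rw [sub_zero] at this
  linarith

lemma mem_dirL {v : V n} : v ∈ dirL 𝒜 ↔ ∀ i : Idx 𝒜, i.1.linear v = 0 := by
  simp [dirL, Submodule.mem_iInf]

/-- Joint linear part. -/
def Phi : V n →ₗ[ℝ] (Idx 𝒜 → ℝ) := LinearMap.pi (fun i => i.1.linear)

lemma Phi_apply (v : V n) (i : Idx 𝒜) : Phi 𝒜 v i = i.1.linear v := rfl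

lemma Phi_eq_zero {v : V n} : Phi 𝒜 v = 0 ↔ v ∈ dirL 𝒜 := by
  rw [mem_dirL, funext_iff]; rfl

/-- Partial face. -/
def PF (S : Finset (Idx 𝒜)) (σ : Idx 𝒜 → SignType) : Set (V n) :=
  {x | ∀ i ∈ S, SignType.sign (i.1 x) = σ i}

/-- Bounded modulo `dirL`. -/
def Bd (A : Set (V n)) : Prop := ∃ C, ∀ x ∈ A, ‖Phi 𝒜 x‖ ≤ C

lemma Bd.mono {A B : Set (V n)} (h : Bd 𝒜 B) (hAB : A ⊆ B) : Bd 𝒜 A := by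
  obtain ⟨C, hC⟩ := h
  exact ⟨C, fun x hx => hC x (hAB hx)⟩

lemma bd_iff (A : Set (V n)) :
    Bornology.IsBounded ((dirL 𝒜).mkQ '' A) ↔ Bd 𝒜 A := by
  have hker : LinearMap.ker (Phi 𝒜) = dirL 𝒜 := by
    ext v; rw [LinearMap.mem_ker, Phi_eq_zero]
  let g : (V n ⧸ dirL 𝒜) →ₗ[ℝ] (Idx 𝒜 → ℝ) := (dirL 𝒜).liftQ (Phi 𝒜) hker.ge
  have hg : ∀ x, g ((dirL 𝒜).mkQ x) = Phi 𝒜 x := fun x => rfl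
  have hginj : LinearMap.ker g = ⊥ := by
    apply Submodule.ker_liftQ_eq_bot; exact hker.le
  have : IsClosed ((dirL 𝒜 : Submodule ℝ (V n)) : Set (V n)) :=
    Submodule.closed_of_finiteDimensional _
  obtain ⟨K, hK, hanti⟩ := LinearMap.exists_antilipschitzWith g hginj
  constructor
  · intro h
    obtain ⟨C, hC⟩ := h.exists_norm_le
    let g' : (V n ⧸ dirL 𝒜) →L[ℝ] (Idx 𝒜 → ℝ) := LinearMap.toContinuousLinearMap g
    refine ⟨‖g'‖ * C, fun x hx => ?_⟩
    rw [← hg]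
    calc ‖g' ((dirL 𝒜).mkQ x)‖ ≤ ‖g'‖ * ‖(dirL 𝒜).mkQ x‖ := g'.le_opNorm _
      _ ≤ _ := by gcongr; exact hC _ ⟨x, hx, rfl⟩
  · rintro ⟨C, hC⟩
    refine isBounded_iff_forall_norm_le.2 ⟨K * C, ?_⟩
    rintro _ ⟨x, hx, rfl⟩
    have := hanti.le_mul_dist ((dirL 𝒜).mkQ x) 0
    rw [dist_zero_right, map_zero, dist_zero_right, hg] at this
    exact this.trans (by gcongr; exact hC x hx)

open Filter Topology in
lemma PF_nhds {S : Finset (Idx 𝒜)} {σ : Idx 𝒜 → SignType} {x v : V n}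
    (hx : x ∈ PF 𝒜 S σ) (hv : ∀ i ∈ S, σ i = 0 → i.1.linear v = 0) :
    ∀ᶠ t : ℝ in 𝓝 0, x + t • v ∈ PF 𝒜 S σ := by
  have : ∀ i ∈ S, ∀ᶠ t : ℝ in 𝓝 0, SignType.sign (i.1 (x + t • v)) = σ i := by
    intro i hi
    have hxi := hx i hi
    simp only [aff_add_smul]
    have hc : Tendsto (fun t : ℝ => i.1 x + t * i.1.linear v) (𝓝 0) (𝓝 (i.1 x)) := by
      have : Continuous (fun t : ℝ => i.1 x + t * i.1.linear v) := by fun_prop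
      simpa using this.tendsto 0
    rcases lt_trichotomy (i.1 x) 0 with h | h | h
    · rw [sign_neg h] at hxi
      filter_upwards [hc.eventually (gt_mem_nhds h)] with t ht
      rw [sign_neg ht, hxi]
    · rw [h, sign_zero] at hxi
      rw [hv i hi hxi.symm, h]
      simp [hxi]
    · rw [sign_pos h] at hxi
      filter_upwards [hc.eventually (lt_mem_nhds h)] with t ht
      rw [sign_pos ht, hxi]
  rw [← Filter.eventually_all_finset] at this
  exact this

lemma PF_step {S : Finset (Idx 𝒜)} {σ : Idx 𝒜 → SignType} {x v : V n}
    (hx : x ∈ PF 𝒜 S σ) (hv : ∀ i ∈ S, σ i = 0 → i.1.linear v = 0) :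
    ∃ ε > 0, x + (ε : ℝ) • v ∈ PF 𝒜 S σ ∧ x + (-ε : ℝ) • v ∈ PF 𝒜 S σ := by
  obtain ⟨δ, hδ, h⟩ := Metric.eventually_nhds_iff.1 (PF_nhds 𝒜 hx hv)
  refine ⟨δ / 2, by positivity, h ?_, h ?_⟩ <;>
    simp [abs_of_pos hδ] <;> linarith

/-- Direction space of a partial face. -/
def KK (S : Finset (Idx 𝒜)) (σ : Idx 𝒜 → SignType) : Submodule ℝ (V n) :=
  ⨅ i : {i // i ∈ S ∧ σ i = 0}, LinearMap.ker i.1.1.linear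

lemma mem_KK {S : Finset (Idx 𝒜)} {σ : Idx 𝒜 → SignType} {v : V n} :
    v ∈ KK 𝒜 S σ ↔ ∀ i ∈ S, σ i = 0 → i.1.linear v = 0 := by
  simp only [KK, Submodule.mem_iInf, LinearMap.mem_ker]
  exact ⟨fun h i hi h0 => h ⟨i, hi, h0⟩, fun h i => h i.1 i.2.1 i.2.2⟩

lemma span_PF {S : Finset (Idx 𝒜)} {σ : Idx 𝒜 → SignType}
    (hne : (PF 𝒜 S σ).Nonempty) : vectorSpan ℝ (PF 𝒜 S σ) = KK 𝒜 S σ := by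
  apply le_antisymm
  · rw [vectorSpan, Submodule.span_le]
    rintro _ ⟨x, hx, y, hy, rfl⟩
    refine (mem_KK 𝒜).2 fun i hi h0 => ?_
    have h1 := hx i hi
    have h2 := hy i hi
    rw [h0, sign_eq_zero_iff] at h1 h2
    show i.1.linear (x - y) = 0
    rw [aff_sub, h1, h2, sub_zero]
  · intro v hv
    obtain ⟨x, hx⟩ := hne
    obtain ⟨ε, hε, h1, -⟩ := PF_step 𝒜 hx ((mem_KK 𝒜).1 hv)
    have := vsub_mem_vectorSpan ℝ h1 hx
    rw [vsub_eq_sub, add_sub_cancel_left] at this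
    exact (Submodule.smul_mem_iff _ hε.ne').1 this

open Classical in
/-- The signed weight of a set. -/
def wt (A : Set (V n)) : ℝ :=
  if A.Nonempty ∧ Bd 𝒜 A then (-1 : ℝ) ^ (dimS A - Module.finrank ℝ (dirL 𝒜)) else 0

lemma dirL_le_KK (S : Finset (Idx 𝒜)) (σ : Idx 𝒜 → SignType) : dirL 𝒜 ≤ KK 𝒜 S σ :=
  fun _ hv => (mem_KK 𝒜).2 fun i _ _ => (mem_dirL 𝒜).1 hv i

/-- Weak recession cone. -/
def InRec (S : Finset (Idx 𝒜)) (σ : Idx 𝒜 → SignType) (v : V n) : Prop :=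
  ∀ i ∈ S, (σ i = 0 → i.1.linear v = 0) ∧ (σ i = 1 → 0 ≤ i.1.linear v) ∧
    (σ i = -1 → i.1.linear v ≤ 0)

lemma sign_eq_one_iff' {x : ℝ} : SignType.sign x = 1 ↔ 0 < x := sign_eq_one_iff
lemma sign_eq_neg_one_iff' {x : ℝ} : SignType.sign x = -1 ↔ x < 0 := sign_eq_neg_one_iff

lemma PF_rec {S : Finset (Idx 𝒜)} {σ : Idx 𝒜 → SignType} {x v : V n}
    (hx : x ∈ PF 𝒜 S σ) (hv : InRec 𝒜 S σ v) {t : ℝ} (ht : 0 ≤ t) :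
    x + t • v ∈ PF 𝒜 S σ := by
  intro i hi
  rw [aff_add_smul]
  obtain ⟨h0, h1, h2⟩ := hv i hi
  have hxi := hx i hi
  rcases hs : σ i with _ | _ | _
  · have hs' : σ i = 0 := hs
    rw [hs', sign_eq_zero_iff] at hxi
    rw [hxi, h0 hs']; simp
  · have hs' : σ i = -1 := hs
    rw [hs', sign_eq_neg_one_iff'] at hxi
    refine sign_eq_neg_one_iff'.2 ?_
    have := h2 hs'
    nlinarith [mul_nonneg ht (neg_nonneg.2 this)]
  · have hs' : σ i = 1 := hs
    rw [hs', sign_eq_one_iff'] at hxi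
    refine sign_eq_one_iff'.2 ?_
    have := mul_nonneg ht (h1 hs')
    linarith

lemma not_Bd_ray {A : Set (V n)} {x v : V n} (hv : v ∉ dirL 𝒜)
    (h : ∀ t : ℝ, 0 ≤ t → x + t • v ∈ A) : ¬ Bd 𝒜 A := by
  rintro ⟨C, hC⟩
  have hpos : 0 < ‖Phi 𝒜 v‖ := norm_pos_iff.2 (fun h => hv ((Phi_eq_zero 𝒜).1 h))
  have hC0 : 0 ≤ C := (norm_nonneg _).trans (hC _ (h 0 le_rfl))
  set t := (C + ‖Phi 𝒜 x‖ + 1) / ‖Phi 𝒜 v‖ with ht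
  have ht0 : 0 ≤ t := by positivity
  have h1 := hC _ (h t ht0)
  rw [map_add, map_smul] at h1
  have h2 : ‖t • Phi 𝒜 v‖ ≤ ‖Phi 𝒜 x + t • Phi 𝒜 v‖ + ‖Phi 𝒜 x‖ := by
    have := norm_sub_le (Phi 𝒜 x + t • Phi 𝒜 v) (Phi 𝒜 x)
    rwa [add_sub_cancel_left] at this
  rw [norm_smul, Real.norm_of_nonneg ht0, ht, div_mul_cancel₀ _ hpos.ne'] at h2
  linarith

open Filter Topology in
lemma exists_rec {S : Finset (Idx 𝒜)} {σ : Idx 𝒜 → SignType}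
    (h : ¬ Bd 𝒜 (PF 𝒜 S σ)) : ∃ v, v ∉ dirL 𝒜 ∧ InRec 𝒜 S σ v := by
  have h' : ∀ k : ℕ, ∃ x ∈ PF 𝒜 S σ, (k : ℝ) < ‖Phi 𝒜 x‖ := by
    intro k
    by_contra hc
    push Not at hc
    exact h ⟨k, hc⟩
  choose x hxm hxk using h'
  have hpos : ∀ k, 0 < ‖Phi 𝒜 (x k)‖ := fun k => (Nat.cast_nonneg k).trans_lt (hxk k)
  have hinv : Tendsto (fun k => ‖Phi 𝒜 (x k)‖⁻¹) atTop (𝓝 0) :=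
    tendsto_inv_atTop_zero.comp
      (tendsto_atTop_mono (fun k => (hxk k).le) tendsto_natCast_atTop_atTop)
  let u : ℕ → (Idx 𝒜 → ℝ) := fun k => ‖Phi 𝒜 (x k)‖⁻¹ • Phi 𝒜 (x k)
  have hu1 : ∀ k, u k ∈ Metric.sphere (0 : Idx 𝒜 → ℝ) 1 := by
    intro k
    simp [u, norm_smul, (hpos k).ne']
  obtain ⟨w, hw, φ, hφ, hlim⟩ := (isCompact_sphere (0 : Idx 𝒜 → ℝ) 1).tendsto_subseq hu1
  have hwr : w ∈ LinearMap.range (Phi 𝒜) := by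
    have hcl : IsClosed ((LinearMap.range (Phi 𝒜) : Submodule ℝ (Idx 𝒜 → ℝ)) : Set (Idx 𝒜 → ℝ)) :=
      Submodule.closed_of_finiteDimensional _
    refine hcl.mem_of_tendsto hlim (Eventually.of_forall fun k => ?_)
    exact ⟨‖Phi 𝒜 (x (φ k))‖⁻¹ • x (φ k), by simp [u]⟩
  obtain ⟨v, rfl⟩ := hwr
  refine ⟨v, fun hv => ?_, fun i hi => ?_⟩
  · rw [(Phi_eq_zero 𝒜).2 hv] at hw
    simp at hw
  · have hi' : Tendsto (fun k => ‖Phi 𝒜 (x (φ k))‖⁻¹ * i.1 (x (φ k))) atTop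
        (𝓝 (i.1.linear v)) := by
      have h1 : Tendsto (fun k => u (φ k) i) atTop (𝓝 (Phi 𝒜 v i)) :=
        (tendsto_pi_nhds.1 hlim) i
      have h2 : Tendsto (fun k => ‖Phi 𝒜 (x (φ k))‖⁻¹ * i.1 0) atTop (𝓝 (0 * i.1 0)) :=
        (hinv.comp hφ.tendsto_atTop).mul_const _
      have h3 := h1.add h2
      rw [zero_mul, add_zero, Phi_apply] at h3
      refine h3.congr fun k => ?_
      rw [aff_eq i.1 (x (φ k)), mul_add]
      rfl
    refine ⟨fun h0 => ?_, fun h0 => ?_, fun h0 => ?_⟩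
    · refine tendsto_nhds_unique hi' (tendsto_const_nhds.congr fun k => ?_)
      have := hxm (φ k) i hi
      rw [h0, sign_eq_zero_iff] at this
      rw [this, mul_zero]
    · refine ge_of_tendsto' hi' fun k => ?_
      have := hxm (φ k) i hi
      rw [h0, sign_eq_one_iff'] at this
      have := hpos (φ k)
      positivity
    · refine le_of_tendsto' hi' fun k => ?_
      have := hxm (φ k) i hi
      rw [h0, sign_eq_neg_one_iff'] at this
      exact mul_nonpos_of_nonneg_of_nonpos (inv_nonneg.2 (hpos (φ k)).le) this.le

lemma PF_convex {S : Finset (Idx 𝒜)} {σ : Idx 𝒜 → SignType} {x y : V n}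
    (hx : x ∈ PF 𝒜 S σ) (hy : y ∈ PF 𝒜 S σ) {t : ℝ} (ht : 0 ≤ t) (ht1 : t ≤ 1) :
    y + t • (x - y) ∈ PF 𝒜 S σ := by
  intro i hi
  have h1 := hx i hi
  have h2 := hy i hi
  rw [aff_add_smul, aff_sub]
  rcases lt_trichotomy (i.1 y) 0 with h | h | h
  · rw [← h2, sign_neg h, sign_eq_neg_one_iff'] at h1
    rw [← h2, sign_neg h, sign_eq_neg_one_iff']
    rcases ht.eq_or_lt with rfl | ht
    · simpa using h
    · nlinarith [mul_pos ht (neg_pos.2 h1), mul_nonneg (sub_nonneg.2 ht1) (neg_pos.2 h).le]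
  · rw [← h2, h, sign_zero, sign_eq_zero_iff] at h1
    rw [← h2, h, h1]; simp
  · rw [← h2, sign_pos h, sign_eq_one_iff'] at h1
    rw [← h2, sign_pos h, sign_eq_one_iff']
    rcases ht.eq_or_lt with rfl | ht
    · simpa using h
    · nlinarith [mul_pos ht h1, mul_nonneg (sub_nonneg.2 ht1) h.le]

open Classical in
lemma mem_PF_update {S : Finset (Idx 𝒜)} {σ : Idx 𝒜 → SignType} {a : Idx 𝒜} (ha : a ∉ S)
    {s : SignType} {x : V n} :
    x ∈ PF 𝒜 (insert a S) (Function.update σ a s) ↔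
      x ∈ PF 𝒜 S σ ∧ SignType.sign (a.1 x) = s := by
  have hne : ∀ i ∈ S, i ≠ a := fun i hi h => ha (h ▸ hi)
  constructor
  · intro h
    refine ⟨fun i hi => ?_, ?_⟩
    · rw [h i (Finset.mem_insert_of_mem hi), Function.update_of_ne (hne i hi)]
    · rw [h a (Finset.mem_insert_self _ _), Function.update_self]
  · rintro ⟨h1, h2⟩ i hi
    rcases Finset.mem_insert.1 hi with rfl | hi
    · rw [h2, Function.update_self]
    · rw [h1 i hi, Function.update_of_ne (hne i hi)]

open Classical in
lemma mem_KK_update {S : Finset (Idx 𝒜)} {σ : Idx 𝒜 → SignType} {a : Idx 𝒜} (ha : a ∉ S)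
    {s : SignType} {v : V n} :
    v ∈ KK 𝒜 (insert a S) (Function.update σ a s) ↔
      v ∈ KK 𝒜 S σ ∧ (s = 0 → a.1.linear v = 0) := by
  have hne : ∀ i ∈ S, i ≠ a := fun i hi h => ha (h ▸ hi)
  rw [mem_KK, mem_KK]
  constructor
  · intro h
    refine ⟨fun i hi h0 => ?_, fun h0 => ?_⟩
    · exact h i (Finset.mem_insert_of_mem hi) (by rw [Function.update_of_ne (hne i hi), h0])
    · exact h a (Finset.mem_insert_self _ _) (by rw [Function.update_self, h0])
  · rintro ⟨h1, h2⟩ i hi h0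
    rcases Finset.mem_insert.1 hi with rfl | hi
    · rw [Function.update_self] at h0; exact h2 h0
    · rw [Function.update_of_ne (hne i hi)] at h0; exact h1 i hi h0

open Classical in
lemma inRec_update {S : Finset (Idx 𝒜)} {σ : Idx 𝒜 → SignType} {a : Idx 𝒜} (ha : a ∉ S)
    {s : SignType} {v : V n} :
    InRec 𝒜 (insert a S) (Function.update σ a s) v ↔
      InRec 𝒜 S σ v ∧ ((s = 0 → a.1.linear v = 0) ∧ (s = 1 → 0 ≤ a.1.linear v) ∧
    (s = -1 → a.1.linear v ≤ 0)) := by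
  have hne : ∀ i ∈ S, i ≠ a := fun i hi h => ha (h ▸ hi)
  constructor
  · intro h
    refine ⟨fun i hi => ?_, ?_⟩
    · have := h i (Finset.mem_insert_of_mem hi)
      rwa [Function.update_of_ne (hne i hi)] at this
    · have := h a (Finset.mem_insert_self _ _)
      rwa [Function.update_self] at this
  · rintro ⟨h1, h2⟩ i hi
    rcases Finset.mem_insert.1 hi with rfl | hi
    · rwa [Function.update_self]
    · rw [Function.update_of_ne (hne i hi)]; exact h1 i hi

lemma finrank_inf_ker (K M : Submodule ℝ (V n)) (φ : V n →ₗ[ℝ] ℝ)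
    (hM : ∀ v, v ∈ M ↔ v ∈ K ∧ φ v = 0) (h : ∃ v ∈ K, φ v ≠ 0) :
    Module.finrank ℝ M + 1 = Module.finrank ℝ K := by
  obtain ⟨v, hv, hφ⟩ := h
  let ψ : Module.Dual ℝ K := φ.comp K.subtype
  have hψ : ψ ≠ 0 := fun h0 => hφ (LinearMap.congr_fun h0 ⟨v, hv⟩)
  rw [← Module.Dual.finrank_ker_add_one_of_ne_zero hψ]
  congr 1
  have : M = (LinearMap.ker ψ).map K.subtype := by
    ext x
    rw [hM]
    simp [ψ, and_comm]
  rw [this, Submodule.finrank_map_subtype_eq]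

/-- Extend boundedness from an open side to the cutting wall. -/
lemma Bd_wall {A B : Set (V n)} (hB : Bd 𝒜 B) (y : V n)
    (h : ∀ x ∈ A, y + (1 / 2 : ℝ) • (x - y) ∈ B) : Bd 𝒜 A := by
  obtain ⟨C, hC⟩ := hB
  refine ⟨2 * C + ‖Phi 𝒜 y‖, fun x hx => ?_⟩
  have h1 := hC _ (h x hx)
  have h2 : Phi 𝒜 x = (2 : ℝ) • Phi 𝒜 (y + (1 / 2 : ℝ) • (x - y)) - Phi 𝒜 y := by
    rw [← map_smul, ← map_sub]
    congr 1
    module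
  rw [h2]
  refine (norm_sub_le _ _).trans ?_
  rw [norm_smul, Real.norm_of_nonneg (by norm_num : (0:ℝ) ≤ 2)]
  linarith

lemma univ_sign : (Finset.univ : Finset SignType) = {0, -1, 1} := rfl

lemma InRec.add {S : Finset (Idx 𝒜)} {σ : Idx 𝒜 → SignType} {v w : V n}
    (hv : InRec 𝒜 S σ v) (hw : InRec 𝒜 S σ w) {c d : ℝ} (hc : 0 ≤ c) (hd : 0 ≤ d) :
    InRec 𝒜 S σ (c • v + d • w) := by
  intro i hi
  obtain ⟨a0, a1, a2⟩ := hv i hi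
  obtain ⟨b0, b1, b2⟩ := hw i hi
  simp only [map_add, map_smul, smul_eq_mul]
  refine ⟨fun h => ?_, fun h => ?_, fun h => ?_⟩
  · rw [a0 h, b0 h]; simp
  · have := mul_nonneg hc (a1 h)
    have := mul_nonneg hd (b1 h)
    linarith
  · have := mul_nonpos_of_nonneg_of_nonpos hc (a2 h)
    have := mul_nonpos_of_nonneg_of_nonpos hd (b2 h)
    linarith

/-- The recession cone is pointed modulo `dirL`. -/
lemma InRec.pointed {S : Finset (Idx 𝒜)} {σ : Idx 𝒜 → SignType} {v w : V n}
    (hS : ∀ v, (∀ i ∈ S, i.1.linear v = 0) → v ∈ dirL 𝒜)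
    (hv : InRec 𝒜 S σ v) (hw : InRec 𝒜 S σ w) {c d : ℝ} (hc : 0 < c) (hd : 0 < d)
    (h : c • v + d • w ∈ dirL 𝒜) : v ∈ dirL 𝒜 := by
  apply hS
  intro i hi
  obtain ⟨a0, a1, a2⟩ := hv i hi
  obtain ⟨b0, b1, b2⟩ := hw i hi
  have h0 := (mem_dirL 𝒜).1 h i
  simp only [map_add, map_smul, smul_eq_mul] at h0
  rcases hs : σ i with _ | _ | _
  · exact a0 hs
  · have h1 := a2 hs
    have h2 := mul_nonpos_of_nonneg_of_nonpos hd.le (b2 hs)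
    by_contra hne
    have h3 := mul_neg_of_pos_of_neg hc (lt_of_le_of_ne h1 hne)
    linarith
  · have h1 := a1 hs
    have h2 := mul_nonneg hd.le (b1 hs)
    by_contra hne
    have h3 := mul_pos hc (lt_of_le_of_ne h1 (Ne.symm hne))
    linarith

open Classical in
lemma wt_cut {S : Finset (Idx 𝒜)} (σ : Idx 𝒜 → SignType) {a : Idx 𝒜} (ha : a ∉ S)
    (hS : ∀ v, (∀ i ∈ S, i.1.linear v = 0) → v ∈ dirL 𝒜) :
    wt 𝒜 (PF 𝒜 S σ) = ∑ s : SignType, wt 𝒜 (PF 𝒜 (insert a S) (Function.update σ a s)) := by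
  by_cases hconst : ∃ s, ∀ x ∈ PF 𝒜 S σ, SignType.sign (a.1 x) = s
  · obtain ⟨s, hs⟩ := hconst
    rw [Finset.sum_eq_single s]
    · congr 1
      ext x
      rw [mem_PF_update 𝒜 ha]
      exact ⟨fun h => ⟨h, hs x h⟩, fun h => h.1⟩
    · intro s' _ hs'
      rw [wt, if_neg]
      rintro ⟨⟨x, hx⟩, -⟩
      rw [mem_PF_update 𝒜 ha] at hx
      exact hs' (hx.2.symm.trans (hs x hx.1))
    · simp
  -- genuine cut
  have hcut : ∃ x0 ∈ PF 𝒜 S σ, a.1 x0 = 0 ∧ ∃ v ∈ KK 𝒜 S σ, 0 < a.1.linear v := by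
    push Not at hconst
    obtain ⟨x, hx, -⟩ := hconst 0
    obtain ⟨y, hy, hxy⟩ := hconst (SignType.sign (a.1 x))
    have hK : x - y ∈ KK 𝒜 S σ := by
      rw [← span_PF 𝒜 ⟨x, hx⟩]; exact vsub_mem_vectorSpan ℝ hx hy
    have hne : a.1.linear (x - y) ≠ 0 := by
      rw [aff_sub]
      intro h
      exact hxy (by rw [sub_eq_zero.1 h])
    have hv : ∃ v ∈ KK 𝒜 S σ, 0 < a.1.linear v := by
      rcases hne.lt_or_gt with h | h
      · exact ⟨-(x - y), neg_mem hK, by rw [map_neg]; linarith⟩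
      · exact ⟨_, hK, h⟩
    rw [aff_sub] at hne
    by_cases hx0 : a.1 x = 0
    · exact ⟨x, hx, hx0, hv⟩
    by_cases hy0 : a.1 y = 0
    · exact ⟨y, hy, hy0, hv⟩
    have hval : ∀ t : ℝ, a.1 (y + t • (x - y)) = a.1 y + t * (a.1 x - a.1 y) := by
      intro t; rw [aff_add_smul, aff_sub]
    have hd : (-a.1 y) / (a.1 x - a.1 y) * (a.1 x - a.1 y) = - a.1 y := div_mul_cancel₀ _ hne
    refine ⟨y + ((-a.1 y) / (a.1 x - a.1 y)) • (x - y), PF_convex 𝒜 hx hy ?_ ?_, ?_, hv⟩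
    · rcases lt_or_gt_of_ne hx0 with h | h <;> rcases lt_or_gt_of_ne hy0 with h' | h'
      · exact absurd (by rw [sign_neg h, sign_neg h']) hxy
      · exact div_nonneg_of_nonpos (by linarith) (by linarith)
      · exact div_nonneg (by linarith) (by linarith)
      · exact absurd (by rw [sign_pos h, sign_pos h']) hxy
    · rcases lt_or_gt_of_ne hx0 with h | h <;> rcases lt_or_gt_of_ne hy0 with h' | h'
      · exact absurd (by rw [sign_neg h, sign_neg h']) hxy
      · rw [div_le_one_of_neg (by linarith)]; linarith
      · rw [div_le_one (by linarith)]; linarith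
      · exact absurd (by rw [sign_pos h, sign_pos h']) hxy
    · rw [hval, hd]; ring
  obtain ⟨x0, hx0, hax0, v, hvK, hav⟩ := hcut
  obtain ⟨ε, hε, hp, hm⟩ := PF_step 𝒜 hx0 ((mem_KK 𝒜).1 hvK)
  set B := PF 𝒜 S σ with hB
  set B0 := PF 𝒜 (insert a S) (Function.update σ a 0) with hB0
  set Bp := PF 𝒜 (insert a S) (Function.update σ a 1) with hBp
  set Bm := PF 𝒜 (insert a S) (Function.update σ a (-1)) with hBm
  have hx0B0 : x0 ∈ B0 := (mem_PF_update 𝒜 ha).2 ⟨hx0, by rw [hax0, sign_zero]⟩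
  have hpB : x0 + ε • v ∈ Bp := (mem_PF_update 𝒜 ha).2 ⟨hp, by
    rw [aff_add_smul, hax0, sign_eq_one_iff']; have := mul_pos hε hav; linarith⟩
  have hmB : x0 + (-ε) • v ∈ Bm := (mem_PF_update 𝒜 ha).2 ⟨hm, by
    rw [aff_add_smul, hax0, sign_eq_neg_one_iff']; have := mul_pos hε hav; linarith⟩
  have hBpB : Bp ⊆ B := fun x hx => ((mem_PF_update 𝒜 ha).1 hx).1
  have hBmB : Bm ⊆ B := fun x hx => ((mem_PF_update 𝒜 ha).1 hx).1
  have hB0B : B0 ⊆ B := fun x hx => ((mem_PF_update 𝒜 ha).1 hx).1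
  have hcover : ∀ x ∈ B, x ∈ B0 ∨ x ∈ Bm ∨ x ∈ Bp := by
    intro x hx
    rcases lt_trichotomy (a.1 x) 0 with h | h | h
    · exact Or.inr (Or.inl ((mem_PF_update 𝒜 ha).2 ⟨hx, sign_neg h⟩))
    · exact Or.inl ((mem_PF_update 𝒜 ha).2 ⟨hx, by rw [h, sign_zero]⟩)
    · exact Or.inr (Or.inr ((mem_PF_update 𝒜 ha).2 ⟨hx, sign_pos h⟩))
  -- dimensions
  have hdB : dimS B = Module.finrank ℝ (KK 𝒜 S σ) := by rw [dimS, span_PF 𝒜 ⟨_, hx0⟩]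
  have hdp : dimS Bp = dimS B := by
    have hKe : KK 𝒜 (insert a S) (Function.update σ a 1) = KK 𝒜 S σ := by
      ext w
      rw [mem_KK_update 𝒜 ha]
      simp
    rw [hdB, dimS, span_PF 𝒜 ⟨_, hpB⟩, hKe]
  have hdm : dimS Bm = dimS B := by
    have hKe : KK 𝒜 (insert a S) (Function.update σ a (-1)) = KK 𝒜 S σ := by
      ext w
      rw [mem_KK_update 𝒜 ha]
      simp
    rw [hdB, dimS, span_PF 𝒜 ⟨_, hmB⟩, hKe]
  have hd0 : dimS B0 + 1 = dimS B := by
    rw [hdB, dimS, span_PF 𝒜 ⟨_, hx0B0⟩]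
    refine finrank_inf_ker _ _ a.1.linear (fun w => ?_) ⟨v, hvK, hav.ne'⟩
    rw [mem_KK_update 𝒜 ha]
    simp
  have hdL : Module.finrank ℝ (dirL 𝒜) ≤ dimS B0 := by
    rw [dimS, span_PF 𝒜 ⟨_, hx0B0⟩]
    exact Submodule.finrank_mono (dirL_le_KK 𝒜 _ _)
  -- boundedness
  have hp0 : Bd 𝒜 Bp → Bd 𝒜 B0 := by
    intro h
    refine Bd_wall 𝒜 h (x0 + ε • v) fun x hx => ?_
    obtain ⟨h1, h2⟩ := (mem_PF_update 𝒜 ha).1 hx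
    obtain ⟨h3, h4⟩ := (mem_PF_update 𝒜 ha).1 hpB
    refine (mem_PF_update 𝒜 ha).2 ⟨PF_convex 𝒜 h1 h3 (by norm_num) (by norm_num), ?_⟩
    rw [sign_eq_zero_iff] at h2
    rw [sign_eq_one_iff'] at h4
    rw [aff_add_smul (x := x0 + ε • v), aff_sub, h2, sign_eq_one_iff']
    linarith
  have hm0 : Bd 𝒜 Bm → Bd 𝒜 B0 := by
    intro h
    refine Bd_wall 𝒜 h (x0 + (-ε) • v) fun x hx => ?_
    obtain ⟨h1, h2⟩ := (mem_PF_update 𝒜 ha).1 hx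
    obtain ⟨h3, h4⟩ := (mem_PF_update 𝒜 ha).1 hmB
    refine (mem_PF_update 𝒜 ha).2 ⟨PF_convex 𝒜 h1 h3 (by norm_num) (by norm_num), ?_⟩
    rw [sign_eq_zero_iff] at h2
    rw [sign_eq_neg_one_iff'] at h4
    rw [aff_add_smul (x := x0 + (-ε) • v), aff_sub, h2, sign_eq_neg_one_iff']
    linarith
  have hpm : Bd 𝒜 Bp → Bd 𝒜 Bm → Bd 𝒜 B := by
    intro h1 h2
    obtain ⟨C0, h0⟩ := hp0 h1
    obtain ⟨C1, h1⟩ := h1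
    obtain ⟨C2, h2⟩ := h2
    refine ⟨max C0 (max C1 C2), fun x hx => ?_⟩
    rcases hcover x hx with h | h | h
    · exact le_max_of_le_left (h0 x h)
    · exact le_max_of_le_right (le_max_of_le_right (h2 x h))
    · exact le_max_of_le_right (le_max_of_le_left (h1 x h))
  have h0pm : Bd 𝒜 B0 → Bd 𝒜 Bp ∨ Bd 𝒜 Bm := by
    intro h
    by_contra hc
    push Not at hc
    obtain ⟨v1, hv1, hr1⟩ := exists_rec 𝒜 hc.1
    obtain ⟨v2, hv2, hr2⟩ := exists_rec 𝒜 hc.2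
    obtain ⟨hr1, -, hs1, -⟩ := (inRec_update 𝒜 ha).1 hr1
    obtain ⟨hr2, -, -, hs2⟩ := (inRec_update 𝒜 ha).1 hr2
    have key : ∀ w, w ∉ dirL 𝒜 → InRec 𝒜 S σ w → a.1.linear w ≠ 0 := by
      intro w hw hr h0
      refine not_Bd_ray 𝒜 hw (x := x0) (A := B0) (fun t ht => ?_) h
      refine PF_rec 𝒜 hx0B0 ?_ ht
      exact (inRec_update 𝒜 ha).2 ⟨hr, fun _ => h0, fun _ => h0.ge, fun _ => h0.le⟩
    have h1 : 0 < a.1.linear v1 := lt_of_le_of_ne (hs1 rfl) (Ne.symm (key v1 hv1 hr1))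
    have h2 : 0 < -a.1.linear v2 := neg_pos.2 (lt_of_le_of_ne (hs2 rfl) (key v2 hv2 hr2))
    refine key ((-a.1.linear v2) • v1 + (a.1.linear v1) • v2) ?_
      (InRec.add 𝒜 hr1 hr2 h2.le h1.le) ?_
    · intro hmem
      exact hv1 (InRec.pointed 𝒜 hS hr1 hr2 h2 h1 hmem)
    · simp only [map_add, map_smul, smul_eq_mul]; ring
  -- assemble
  have hnB : B.Nonempty := ⟨_, hx0⟩
  have hn0 : B0.Nonempty := ⟨_, hx0B0⟩
  have hnp : Bp.Nonempty := ⟨_, hpB⟩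
  have hnm : Bm.Nonempty := ⟨_, hmB⟩
  obtain ⟨k, hk⟩ := Nat.exists_eq_add_of_le hdL
  have e0 : dimS B0 - Module.finrank ℝ (dirL 𝒜) = k := by omega
  have eB : dimS B - Module.finrank ℝ (dirL 𝒜) = k + 1 := by omega
  rw [univ_sign, Finset.sum_insert (by decide), Finset.sum_insert (by decide),
    Finset.sum_singleton, ← hB0, ← hBm, ← hBp]
  simp only [wt, hnB, hn0, hnp, hnm, true_and, hdp, hdm, eB, e0]
  by_cases hb : Bd 𝒜 B
  · rw [if_pos hb, if_pos (hb.mono 𝒜 hB0B), if_pos (hb.mono 𝒜 hBmB), if_pos (hb.mono 𝒜 hBpB)]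
    ring
  · rw [if_neg hb]
    by_cases h1 : Bd 𝒜 Bp
    · have h2 : ¬ Bd 𝒜 Bm := fun h2 => hb (hpm h1 h2)
      rw [if_pos h1, if_neg h2, if_pos (hp0 h1)]
      ring
    · by_cases h2 : Bd 𝒜 Bm
      · rw [if_neg h1, if_pos h2, if_pos (hm0 h2)]
        ring
      · have h3 : ¬ Bd 𝒜 B0 := fun h => (h0pm h).elim h1 h2
        rw [if_neg h1, if_neg h2, if_neg h3]
        ring

/-- Sign vectors supported on `S \ P`. -/
def Dom (P S : Finset (Idx 𝒜)) : Set (Idx 𝒜 → SignType) :=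
  {σ | ∀ i, i ∉ S ∨ i ∈ P → σ i = 0}

open Classical in
/-- The total weight. -/
def tot (P S : Finset (Idx 𝒜)) : ℝ :=
  ∑ σ ∈ (Finset.univ.filter fun σ : Idx 𝒜 → SignType => σ ∈ Dom 𝒜 P S), wt 𝒜 (PF 𝒜 S σ)

open Classical in
lemma tot_insert {P S : Finset (Idx 𝒜)} (hPS : P ⊆ S) {a : Idx 𝒜} (ha : a ∉ S)
    (hS : ∀ v, (∀ i ∈ S, i.1.linear v = 0) → v ∈ dirL 𝒜) :
    tot 𝒜 P (insert a S) = tot 𝒜 P S := by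
  have haP : a ∉ P := fun h => ha (hPS h)
  unfold tot
  rw [Finset.sum_congr rfl (fun σ _ => wt_cut 𝒜 σ ha hS), ← Finset.sum_product']
  symm
  refine Finset.sum_nbij' (fun p => Function.update p.1 a p.2)
    (fun τ => (Function.update τ a 0, τ a)) ?_ ?_ ?_ ?_ ?_
  · rintro ⟨σ, s⟩ h
    simp only [Finset.mem_product, Finset.mem_filter, Finset.mem_univ, true_and, and_true] at h ⊢
    intro i hi
    have hia : i ≠ a := by
      rintro rfl
      simp [haP] at hi
    rw [Function.update_of_ne hia]
    exact h i (hi.imp (fun h h' => h (Finset.mem_insert_of_mem h')) id)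
  · intro τ h
    simp only [Finset.mem_product, Finset.mem_filter, Finset.mem_univ, true_and, and_true] at h ⊢
    intro i hi
    by_cases hia : i = a
    · subst hia; simp
    · rw [Function.update_of_ne hia]
      exact h i (hi.imp (fun h h' => (Finset.mem_insert.1 h').elim hia h) id)
  · rintro ⟨σ, s⟩ h
    simp only [Finset.mem_product, Finset.mem_filter, Finset.mem_univ, true_and, and_true] at h
    have := h a (Or.inl ha)
    simp only [Function.update_idem, Function.update_self, Prod.mk.injEq, and_true]
    rw [← this, Function.update_eq_self]
  · intro τ _
    simp
  · rintro ⟨σ, s⟩ _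
    rfl

open Classical in
lemma tot_univ {P S : Finset (Idx 𝒜)} (hPS : P ⊆ S)
    (hS : ∀ v, (∀ i ∈ S, i.1.linear v = 0) → v ∈ dirL 𝒜) (R : Finset (Idx 𝒜)) :
    tot 𝒜 P (R ∪ S) = tot 𝒜 P S := by
  induction R using Finset.induction_on with
  | empty => simp
  | insert a R _ ih =>
    rw [Finset.insert_union]
    by_cases h : a ∈ R ∪ S
    · rw [Finset.insert_eq_self.2 h, ih]
    · rw [tot_insert 𝒜 (hPS.trans Finset.subset_union_right) h, ih]
      exact fun v hv => hS v fun i hi => hv i (Finset.mem_union_right _ hi)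

open Classical in
lemma tot_base {P S : Finset (Idx 𝒜)} {p : V n} (hp : ∀ i ∈ S, i.1 p = 0)
    (hS : ∀ v, (∀ i ∈ S, i.1.linear v = 0) → v ∈ dirL 𝒜) :
    tot 𝒜 P S = 1 := by
  have hp0 : p ∈ PF 𝒜 S 0 := fun i hi => by rw [hp i hi, sign_zero]; rfl
  unfold tot
  rw [Finset.sum_eq_single 0]
  · have hK : KK 𝒜 S 0 = dirL 𝒜 := by
      refine le_antisymm (fun v hv => hS v fun i hi => ?_) (dirL_le_KK 𝒜 _ _)
      exact (mem_KK 𝒜).1 hv i hi rfl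
    rw [wt, if_pos, dimS, span_PF 𝒜 ⟨p, hp0⟩, hK, Nat.sub_self, pow_zero]
    refine ⟨⟨p, hp0⟩, ‖Phi 𝒜 p‖, fun x hx => ?_⟩
    have : x - p ∈ dirL 𝒜 := hS _ fun i hi => by
      have := hx i hi
      rw [Pi.zero_apply, sign_eq_zero_iff] at this
      rw [aff_sub, this, hp i hi, sub_zero]
    rw [← Phi_eq_zero, map_sub, sub_eq_zero] at this
    rw [this]
  · intro σ hσ hne
    rw [wt, if_neg]
    rintro ⟨⟨x, hx⟩, hb⟩
    simp only [Finset.mem_filter, Finset.mem_univ, true_and] at hσ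
    obtain ⟨i, hi⟩ := Function.ne_iff.1 hne
    have hiS : i ∈ S := by
      by_contra h
      exact hi (hσ i (Or.inl h))
    have hlin : ∀ j ∈ S, j.1.linear (x - p) = j.1 x := fun j hj => by
      rw [aff_sub, hp j hj, sub_zero]
    refine not_Bd_ray 𝒜 (v := x - p) (x := x) (fun h => ?_) (fun t ht => ?_) hb
    · have h1 := (mem_dirL 𝒜).1 h i
      rw [hlin i hiS] at h1
      have h2 := hx i hiS
      rw [h1, sign_zero] at h2
      exact hi h2.symm
    · refine PF_rec 𝒜 hx (fun j hj => ?_) ht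
      rw [hlin j hj, ← hx j hj]
      exact ⟨fun h => sign_eq_zero_iff.1 h, fun h => (sign_eq_one_iff'.1 h).le,
        fun h => (sign_eq_neg_one_iff'.1 h).le⟩
  · intro h
    exact absurd (Finset.mem_filter.2 ⟨Finset.mem_univ _, fun _ _ => rfl⟩) h

open Classical in
lemma tot_eq_one (P : Finset (Idx 𝒜)) (hP : ∃ p : V n, ∀ i ∈ P, i.1 p = 0) :
    tot 𝒜 P Finset.univ = 1 := by
  let T : Finset (Finset (Idx 𝒜)) :=
    Finset.univ.filter fun S => P ⊆ S ∧ ∃ p : V n, ∀ i ∈ S, i.1 p = 0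
  have hT : T.Nonempty := ⟨P, Finset.mem_filter.2 ⟨Finset.mem_univ _, subset_rfl, hP⟩⟩
  obtain ⟨S, hST, hmax⟩ := Finset.exists_max_image T Finset.card hT
  obtain ⟨-, hPS, p, hp⟩ := Finset.mem_filter.1 hST
  have hS : ∀ v, (∀ i ∈ S, i.1.linear v = 0) → v ∈ dirL 𝒜 := by
    intro v hv
    rw [mem_dirL]
    intro j
    by_contra hj
    have hjS : j ∉ S := fun h => hj (hv j h)
    have : insert j S ∈ T := by
      refine Finset.mem_filter.2 ⟨Finset.mem_univ _, hPS.trans (Finset.subset_insert _ _),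
        p + (-j.1 p / j.1.linear v) • v, fun i hi => ?_⟩
      rw [aff_add_smul]
      rcases Finset.mem_insert.1 hi with rfl | hi
      · rw [div_mul_cancel₀ _ hj]; ring
      · rw [hp i hi, hv i hi]; simp
    have := hmax _ this
    rw [Finset.card_insert_of_notMem hjS] at this
    omega
  have h := tot_univ 𝒜 hPS hS Finset.univ
  rw [Finset.union_eq_left.2 (Finset.subset_univ S)] at h
  rw [h, tot_base 𝒜 hp hS]

end Helpers

open Classical in
/-- **Proposition.** The unit element `υ = Σ_{F essentially bounded} (-1)^{rk F} H_F`
of the Tits algebra is characteristic of parameter `1`. -/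
theorem unit_isCharacteristic {n : ℕ} (𝒜 : Finset (AffForm n))
    (h𝒜 : ∀ ℓ ∈ 𝒜, ℓ.linear ≠ 0) :
    IsCharacteristic 𝒜 (Module.finrank ℝ (dirL 𝒜))
      (fun F => if EssBounded 𝒜 F then
        (-1 : ℝ) ^ (dimS (Face.carrier 𝒜 F) - Module.finrank ℝ (dirL 𝒜)) else 0) 1 := by
  intro X
  rw [one_pow]
  obtain ⟨X, ⟨p, hpX⟩, Q, rfl⟩ := X
  let P : Finset (Idx 𝒜) := Finset.univ.filter Q
  have hpP : ∀ i ∈ P, i.1 p = 0 := by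
    intro i hi
    simp only [Set.mem_iInter] at hpX
    exact hpX i (Finset.mem_filter.1 hi).2
  refine Eq.trans ?_ (tot_eq_one 𝒜 P ⟨p, hpP⟩)
  have hsupp : ∀ F : Face 𝒜, (supp 𝒜 F).1 ⊆ (⋂ ℓ ∈ {ℓ : Idx 𝒜 | Q ℓ}, hypSet ℓ.1) ↔
      F.sgn ∈ Dom 𝒜 P Finset.univ := by
    intro F
    constructor
    · rintro h i (hi | hi)
      · simp at hi
      · obtain ⟨x, hx⟩ := F.nonempty
        have hxs : x ∈ (supp 𝒜 F).1 := by
          simp only [supp, Set.mem_iInter]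
          intro j hj
          have := hx j
          rw [show F.sgn j = 0 from hj, sign_eq_zero_iff] at this
          exact this
        have h1 := h hxs
        simp only [Set.mem_iInter] at h1
        have h2 : i.1 x = 0 := h1 i (Finset.mem_filter.1 hi).2
        rw [← hx i, h2, sign_zero]
    · intro h x hx
      simp only [supp, Set.mem_iInter] at hx ⊢
      intro i hi
      exact hx i (h i (Or.inr (Finset.mem_filter.2 ⟨Finset.mem_univ _, hi⟩)))
  have hPF : ∀ σ, PF 𝒜 Finset.univ σ = faceSet 𝒜 σ := by
    intro σ
    ext x
    exact ⟨fun h i => h i (Finset.mem_univ _), fun h i _ => h i⟩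
  unfold tot
  rw [← Finset.sum_filter]
  refine Finset.sum_of_injOn Face.sgn ?_ ?_ ?_ ?_
  · intro F _ G _ h
    exact Face.ext h
  · intro F hF
    have := (Finset.mem_filter.1 (Finset.mem_coe.1 hF)).2
    exact Finset.mem_coe.2 (Finset.mem_filter.2 ⟨Finset.mem_univ _, (hsupp F).1 this⟩)
  · intro σ hσ hσ'
    rw [wt, if_neg]
    rintro ⟨hne, -⟩
    rw [hPF] at hne
    refine hσ' ⟨⟨σ, hne⟩, Finset.mem_coe.2 (Finset.mem_filter.2 ⟨Finset.mem_univ _, ?_⟩), rfl⟩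
    exact (hsupp ⟨σ, hne⟩).2 (Finset.mem_filter.1 hσ).2
  · intro F _
    have hb : EssBounded 𝒜 F ↔ Bd 𝒜 (faceSet 𝒜 F.sgn) := bd_iff 𝒜 _
    simp only [wt, hPF, F.nonempty, true_and, hb]
    rfl

end CharElts
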